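/- Let A be a unital C*-algebra, n,m ≥ 1, q ∈ ℂ with |q| < 1, and let s_1,…,s_n, t_1,…,t_m ∈ A satisfy the E_{n,m}^q-relations. Then for each r = 1,…,m the partial sums S_N = Σ_{k=0}^{N} q^k Σ_{μ ∈ {1,…,n}^k} s_μ t̃_r s_μ* converge in norm to t_r as N → ∞; equivalently, S_N = t_r − q^{N+1} Σ_{μ ∈ {1,…,n}^{N+1}} s_μ t_r s_μ* for every N, and the remainder tends to 0 in norm. -/

import Mathlib

open scoped BigOperators

/-- Product `s_{μ_1} ⋯ s_{μ_k}` associated to a word `μ ∈ {1,…,n}^k`. -/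
noncomputable def wordProd {A : Type*} [Monoid A] {n k : ℕ} (s : Fin n → A)
    (μ : Fin k → Fin n) : A :=
  (List.ofFn fun i => s (μ i)).prod

/-!
Let `Φ x = ∑ i, s i * x * star (s i)`. The relation `star (s i) * t = q • (t * star (s i))` says
`(1 - Q) * t = (1 - q • Φ) t`, and conjugating by all words of length `k` is `Φ ^ k`, so the partial
sums are those of the Neumann series of `1 - q • Φ`, with remainder `(q • Φ) ^ (N + 1)` applied
to `t`. As the `s i` are isometries with orthogonal ranges, `Φ` is a (non-unital) star endomorphism,
hence a contraction, and the remainder is at most `‖q‖ ^ (N + 1) * ‖t‖`.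
-/

section PowersOfEndomorphism

theorem sum_range_pow_smul_pow_apply_sub {R M : Type*} [CommRing R] [AddCommGroup M] [Module R M]
    (f : Module.End R M) (q : R) (x : M) (N : ℕ) :
    ∑ k ∈ Finset.range N, q ^ k • (f ^ k) (x - q • f x) = x - q ^ N • (f ^ N) x := by
  have neumann := LinearMap.congr_fun (geom_sum_mul_neg (q • f) N) x
  simpa only [smul_pow, Module.End.mul_apply, LinearMap.sum_apply, LinearMap.sub_apply,
    LinearMap.smul_apply, Module.End.one_apply] using neumann

variable {𝕜 E : Type*} [NormedField 𝕜] [SeminormedAddCommGroup E] [NormedSpace 𝕜 E]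
  {f : Module.End 𝕜 E}

theorem norm_pow_apply_le_of_norm_apply_le (hf : ∀ x, ‖f x‖ ≤ ‖x‖) (k : ℕ) (x : E) :
    ‖(f ^ k) x‖ ≤ ‖x‖ := by
  induction k with
  | zero => rfl
  | succ k ih =>
    rw [pow_succ', Module.End.mul_apply]
    exact (hf _).trans ih

theorem tendsto_pow_smul_pow_apply_zero (hf : ∀ x, ‖f x‖ ≤ ‖x‖) {q : 𝕜} (hq : ‖q‖ < 1) (x : E) :
    Filter.Tendsto (fun N : ℕ => q ^ N • (f ^ N) x) Filter.atTop (nhds 0) := by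
  have norm_le (N : ℕ) : ‖q ^ N • (f ^ N) x‖ ≤ ‖q‖ ^ N * ‖x‖ := by
    rw [norm_smul, norm_pow]
    gcongr
    exact norm_pow_apply_le_of_norm_apply_le hf N x
  refine squeeze_zero_norm norm_le ?_
  simpa only [zero_mul] using
    (tendsto_pow_atTop_nhds_zero_of_lt_one (norm_nonneg q) hq).mul_const ‖x‖

end PowersOfEndomorphism

theorem wordProd_cons {M : Type*} [Monoid M] {n k : ℕ} (s : Fin n → M) (i : Fin n)
    (μ : Fin k → Fin n) : wordProd s (Fin.cons i μ : Fin (k + 1) → Fin n) = s i * wordProd s μ := by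
  simp only [wordProd, List.ofFn_succ, List.prod_cons, Fin.cons_zero, Fin.cons_succ]

section StarConjSum

variable {ι R A : Type*} [Fintype ι] [CommSemiring R]

variable (R) in
/-- The linear map `x ↦ ∑ i, s i * x * star (s i)`, whose powers are the sums over words of a fixed
length; it is bundled as an element of `Module.End R A` to make these powers available. -/
def starConjSum [NonUnitalSemiring A] [Star A] [Module R A]
    [SMulCommClass R A A] [IsScalarTower R A A] (s : ι → A) : Module.End R A :=
  ∑ i, LinearMap.mulLeftRight R (s i, star (s i))

theorem starConjSum_apply [NonUnitalSemiring A] [Star A] [Module R A]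
    [SMulCommClass R A A] [IsScalarTower R A A] (s : ι → A) (x : A) :
    starConjSum R s x = ∑ i, s i * x * star (s i) := by
  simp only [starConjSum, LinearMap.sum_apply, LinearMap.mulLeftRight_apply]

theorem star_starConjSum_apply [NonUnitalSemiring A] [StarRing A] [Module R A]
    [SMulCommClass R A A] [IsScalarTower R A A] (s : ι → A) (x : A) :
    star (starConjSum R s x) = starConjSum R s (star x) := by
  simp only [starConjSum_apply, star_sum, star_mul, star_star, mul_assoc]

variable [Semiring A] [StarRing A] [Algebra R A]

theorem starConjSum_apply_mul [DecidableEq ι] {s : ι → A}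
    (hs : ∀ i j, star (s i) * s j = if i = j then 1 else 0) (x y : A) :
    starConjSum R s (x * y) = starConjSum R s x * starConjSum R s y := by
  have orthogonal (i j : ι) : s i * x * star (s i) * (s j * y * star (s j)) =
      if i = j then s i * (x * y) * star (s j) else 0 := by
    calc s i * x * star (s i) * (s j * y * star (s j))
        = s i * x * (star (s i) * s j) * y * star (s j) := by simp only [mul_assoc]
      _ = if i = j then s i * (x * y) * star (s j) else 0 := by
        rw [hs]
        split_ifs <;> simp only [mul_assoc, one_mul, mul_zero, zero_mul]
  simp only [starConjSum_apply, Finset.sum_mul_sum, orthogonal, Finset.sum_ite_eq,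
    Finset.mem_univ, if_true]

variable (R) in
/-- For isometries `s i` with pairwise orthogonal ranges, `starConjSum R s` as a star homomorphism;
it is non-unital because it sends `1` to the projection `∑ i, s i * star (s i)`. -/
def starConjSumHom [DecidableEq ι] {s : ι → A}
    (hs : ∀ i j, star (s i) * s j = if i = j then 1 else 0) : A →⋆ₙₐ[R] A where
  toFun := starConjSum R s
  map_smul' := map_smul (starConjSum R s)
  map_zero' := map_zero (starConjSum R s)
  map_add' := map_add (starConjSum R s)
  map_mul' := starConjSum_apply_mul hs
  map_star' x := (star_starConjSum_apply s x).symm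

theorem sum_wordProd_mul_mul_star_wordProd {n : ℕ} (s : Fin n → A) (k : ℕ) (x : A) :
    ∑ μ : Fin k → Fin n, wordProd s μ * x * star (wordProd s μ) = (starConjSum R s ^ k) x := by
  induction k with
  | zero => simp [wordProd]
  | succ k ih =>
    rw [pow_succ', Module.End.mul_apply, ← ih, starConjSum_apply,
      ← (Fin.consEquiv fun _ => Fin n).sum_comp, Fintype.sum_prod_type]
    simp only [Fin.consEquiv, Equiv.coe_fn_mk, wordProd_cons, star_mul, Finset.mul_sum,
      Finset.sum_mul, mul_assoc]

end StarConjSum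

theorem one_sub_sum_mul_star_mul {ι R A : Type*} [Fintype ι] [CommSemiring R] [Ring A] [Star A]
    [Algebra R A] {q : R} {s : ι → A} {t : A}
    (hst : ∀ i, star (s i) * t = q • (t * star (s i))) :
    (1 - ∑ i, s i * star (s i)) * t = t - q • starConjSum R s t := by
  simp only [sub_mul, one_mul, Finset.sum_mul, mul_assoc, hst, mul_smul_comm, ← Finset.smul_sum,
    starConjSum_apply]

theorem norm_starConjSum_apply_le {ι A : Type*} [Fintype ι] [DecidableEq ι] [CStarAlgebra A]
    {s : ι → A} (hs : ∀ i j, star (s i) * s j = if i = j then 1 else 0) (x : A) :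
    ‖starConjSum ℂ s x‖ ≤ ‖x‖ :=
  NonUnitalStarAlgHom.norm_apply_le (starConjSumHom ℂ hs) x

theorem stmt_4_general {A : Type*} [CStarAlgebra A] {n : ℕ} {q : ℂ} (hq : ‖q‖ < 1)
    {s : Fin n → A} (hs : ∀ i j, star (s i) * s j = if i = j then 1 else 0)
    {t : A} (hst : ∀ j, star (s j) * t = q • (t * star (s j)))
    {S : ℕ → A} (hS : ∀ N, S N = ∑ k ∈ Finset.range (N + 1), q ^ k • ∑ μ : Fin k → Fin n,
      wordProd s μ * ((1 - ∑ i, s i * star (s i)) * t) * star (wordProd s μ)) :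
    (∀ N, S N = t - q ^ (N + 1) •
      ∑ μ : Fin (N + 1) → Fin n, wordProd s μ * t * star (wordProd s μ)) ∧
    Filter.Tendsto (fun N : ℕ => q ^ (N + 1) •
      ∑ μ : Fin (N + 1) → Fin n, wordProd s μ * t * star (wordProd s μ))
      Filter.atTop (nhds 0) ∧
    Filter.Tendsto S Filter.atTop (nhds t) := by
  simp only [sum_wordProd_mul_mul_star_wordProd (R := ℂ), one_sub_sum_mul_star_mul hst,
    sum_range_pow_smul_pow_apply_sub] at hS ⊢
  have remainder_tendsto : Filter.Tendsto
      (fun N : ℕ => q ^ (N + 1) • (starConjSum ℂ s ^ (N + 1)) t) Filter.atTop (nhds 0) :=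
    (tendsto_pow_smul_pow_apply_zero (norm_starConjSum_apply_le hs) hq t).comp
      (Filter.tendsto_add_atTop_nat 1)
  refine ⟨hS, remainder_tendsto, ?_⟩
  simpa only [sub_zero, ← hS] using remainder_tendsto.const_sub t

theorem stmt_4 {A : Type*} [NormedRing A] [StarRing A] [CStarRing A]
    [NormedAlgebra ℂ A] [StarModule ℂ A] [CompleteSpace A]
    {n m : ℕ} (hn : 1 ≤ n) (hm : 1 ≤ m) (q : ℂ) (hq : ‖q‖ < 1)
    (s : Fin n → A) (t : Fin m → A)
    (hs : ∀ i j : Fin n, star (s i) * s j = if i = j then 1 else 0)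
    (ht : ∀ r l : Fin m, star (t r) * t l = if r = l then 1 else 0)
    (hst : ∀ (j : Fin n) (r : Fin m), star (s j) * t r = q • (t r * star (s j)))
    (Q : A) (hQ : Q = ∑ i : Fin n, s i * star (s i))
    (tt : Fin m → A) (htt : ∀ l, tt l = (1 - Q) * t l)
    (S : Fin m → ℕ → A)
    (hS : ∀ r N, S r N = ∑ k ∈ Finset.range (N + 1),
      q ^ k • ∑ μ : Fin k → Fin n, wordProd s μ * tt r * star (wordProd s μ)) :
    ∀ r : Fin m,
      (∀ N : ℕ, S r N = t r - q ^ (N + 1) •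
        ∑ μ : Fin (N + 1) → Fin n, wordProd s μ * t r * star (wordProd s μ)) ∧
      Filter.Tendsto (fun N : ℕ => q ^ (N + 1) •
        ∑ μ : Fin (N + 1) → Fin n, wordProd s μ * t r * star (wordProd s μ))
        Filter.atTop (nhds 0) ∧
      Filter.Tendsto (fun N : ℕ => S r N) Filter.atTop (nhds (t r)) := by
  intro r
  let _ : CStarAlgebra A := {}
  exact stmt_4_general hq hs (hst · r) (by simpa only [htt, hQ] using hS r)
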